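/- arXiv:2104.00354 — 5 statements merged into one kernel-verified Lean document; each statement's English description precedes it below -/
import Mathlib

section
/- Let H be a real Hilbert space, Y ⊆ H a nonempty closed convex set, f : H → ℝ convex and continuously differentiable with L_f-Lipschitz continuous gradient on Y, and g : H → ℝ ∪ {+∞} proper, convex and lower semicontinuous with dom(g) ⊆ Y ⊆ dom(f); set F = f + g. Let x̄ ∈ Y, τ > 0, let D be a bounded self-adjoint linear operator on H with η_inf·I ⪯ D ⪯ η_sup·I for some 0 < η_inf ≤ η_sup, let ε ≥ 0, let x̂ be the unique minimizer over H of h_{τ,D}(z; x̄) := f(x̄) + ⟨∇f(x̄), z − x̄⟩ + (1/(2τ))‖z − x̄‖²_D + g(z), and let x̃ ∈ dom(g) satisfy h_{τ,D}(x̃; x̄) − h_{τ,D}(x̂; x̄) ≤ ε. Then for every x ∈ H: F(x̃) + (1/(2τ))‖x − x̃‖²_D + ( (1/(2τ))‖x̃ − x̄‖²_D − 𝔻_f(x̃, x̄) ) ≤ F(x) + (1/(2τ))‖x − x̄‖²_D + ε + (√(2ετ)/τ)‖x − x̃‖_D. -/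
open scoped RealInnerProductSpace

/-!
The subproblem `h_{τ,D}(· ; x̄)` is a convex function plus half the square of the seminorm
`‖·‖_D / √τ`. Comparing its minimizer `x̂` with the points `t z + (1 - t) x̂`, dividing by `t` and
letting `t → 0` shows that it exceeds its minimum at `z` by at least `‖z - x̂‖²_D / (2τ)`. At
`z = x̃` this bounds `‖x̃ - x̂‖_D` by `√(2ετ)`; at `z = x`, expanding `‖(x - x̃) + (x̃ - x̂)‖²_D` and
bounding the cross term by Cauchy–Schwarz replaces `x̂` by `x̃`. Since the linearization of `f` at
`x̄` lies below `f`, the resulting inequality for the subproblem gives the one for `F`.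
-/

lemma le_of_forall_one_sub_mul_le {a b : ℝ}
    (h : ∀ t : ℝ, 0 < t → t < 1 → (1 - t) * a ≤ b) : a ≤ b := by
  have hlim : Filter.Tendsto (fun t : ℝ => (1 - t) * a) (nhdsWithin 0 (Set.Ioi 0)) (nhds a) := by
    have hcont : Continuous fun t : ℝ => (1 - t) * a := by fun_prop
    simpa only [sub_zero, one_mul] using (hcont.tendsto 0).mono_left nhdsWithin_le_nhds
  refine le_of_tendsto hlim ?_
  filter_upwards [Ioo_mem_nhdsGT one_pos] with t ht using h t ht.1 ht.2

lemma bilin_self_convex_combination {R M : Type*} [CommRing R] [AddCommGroup M] [Module R M]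
    (B : LinearMap.BilinForm R M) (x y : M) (t : R) :
    B (t • x + (1 - t) • y) (t • x + (1 - t) • y)
      = t * B x x + (1 - t) * B y y - t * (1 - t) * B (x - y) (x - y) := by
  simp only [map_add, map_sub, map_smul, LinearMap.add_apply, LinearMap.sub_apply,
    LinearMap.smul_apply, smul_eq_mul]
  ring

section ProximalStep

variable {E : Type*} [AddCommGroup E] [Module ℝ E] {B : LinearMap.BilinForm ℝ E}
  {s : Set E} {φ : E → ℝ} {c p y z : E} {ε : ℝ}

lemma bilin_self_sub_two_mul_sqrt_le (hB : B.IsPosSemidef) (x y : E) :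
    B x x - 2 * (√(B x x) * √(B y y)) ≤ B (x + y) (x + y) := by
  have cauchy_schwarz : |B x y| ≤ √(B x x) * √(B y y) := by
    rw [← Real.sqrt_mul (hB.nonneg x)]
    exact Real.abs_le_sqrt (B.apply_sq_le_of_symm hB.nonneg
      (LinearMap.BilinForm.isSymm_iff.1 hB.isSymm) x y)
  have expand : B (x + y) (x + y) = B x x + 2 * B x y + B y y := by
    simp only [map_add, LinearMap.add_apply, hB.isSymm.eq y x]
    ring
  linarith [neg_abs_le (B x y), hB.nonneg y]

theorem prox_three_point (hφ : ConvexOn ℝ s φ) (hp : p ∈ s)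
    (hmin : IsMinOn (fun z => φ z + 1 / 2 * B (z - c) (z - c)) s p) (hz : z ∈ s) :
    φ p + 1 / 2 * B (p - c) (p - c) + 1 / 2 * B (z - p) (z - p)
      ≤ φ z + 1 / 2 * B (z - c) (z - c) := by
  rw [← le_sub_iff_add_le']
  refine le_of_forall_one_sub_mul_le fun t ht0 ht1 => le_of_mul_le_mul_left ?_ ht0
  have hmem : t • z + (1 - t) • p ∈ s := hφ.1 hz hp ht0.le (by linarith) (by ring)
  have hconv : φ (t • z + (1 - t) • p) ≤ t * φ z + (1 - t) * φ p :=
    hφ.2 hz hp ht0.le (by linarith) (by ring)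
  have hopt := isMinOn_iff.1 hmin _ hmem
  have hshift : t • z + (1 - t) • p - c = t • (z - c) + (1 - t) • (p - c) := by module
  rw [hshift, bilin_self_convex_combination, sub_sub_sub_cancel_right] at hopt
  linarith

theorem inexact_prox_three_point (hB : B.IsPosSemidef) (hφ : ConvexOn ℝ s φ) (hp : p ∈ s)
    (hmin : IsMinOn (fun z => φ z + 1 / 2 * B (z - c) (z - c)) s p) (hy : y ∈ s)
    (hyε : φ y + 1 / 2 * B (y - c) (y - c) ≤ φ p + 1 / 2 * B (p - c) (p - c) + ε) (hz : z ∈ s) :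
    φ y + 1 / 2 * B (y - c) (y - c) + 1 / 2 * B (z - y) (z - y)
      ≤ φ z + 1 / 2 * B (z - c) (z - c) + ε + √(2 * ε) * √(B (z - y) (z - y)) := by
  have hdist : B (y - p) (y - p) ≤ 2 * ε := by linarith [prox_three_point hφ hp hmin hy]
  have htriangle := bilin_self_sub_two_mul_sqrt_le hB (z - y) (y - p)
  rw [sub_add_sub_cancel] at htriangle
  have hcross : √(B (z - y) (z - y)) * √(B (y - p) (y - p))
      ≤ √(B (z - y) (z - y)) * √(2 * ε) := by gcongr
  linarith [prox_three_point hφ hp hmin hz]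

end ProximalStep

section ForwardBackwardStep

variable {E : Type*} [AddCommGroup E] [Module ℝ E]

/-- The smooth part `f c + ℓ (z - c) + ‖z - c‖²_B / (2τ)` of the forward–backward subproblem: the
linearization of `f` at `c` with slope `ℓ` (in applications the derivative of `f` at `c`), plus the
quadratic penalty of step size `τ` in the metric `‖x‖²_B = B x x`. Adding `g z` gives
`h_{τ,D}(z; c)`. -/
noncomputable def quadraticModel (f : E → ℝ) (ℓ : E →ₗ[ℝ] ℝ) (B : LinearMap.BilinForm ℝ E)
    (τ : ℝ) (c z : E) : ℝ :=
  f c + ℓ (z - c) + (1 / (2 * τ)) * B (z - c) (z - c)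

theorem inexact_forward_backward_descent {s : Set E} {f g : E → ℝ} {ℓ : E →ₗ[ℝ] ℝ}
    {B : LinearMap.BilinForm ℝ E} {c p x y : E} {τ ε : ℝ}
    (hf : f c + ℓ (x - c) ≤ f x) (hg : ConvexOn ℝ s g) (hτ : 0 < τ) (hB : B.IsPosSemidef)
    (hp : p ∈ s) (hmin : IsMinOn (fun z => quadraticModel f ℓ B τ c z + g z) s p) (hy : y ∈ s)
    (hyε : quadraticModel f ℓ B τ c y + g y ≤ quadraticModel f ℓ B τ c p + g p + ε)
    (hx : x ∈ s) :
    f y + g y + 1 / (2 * τ) * B (x - y) (x - y)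
        + (1 / (2 * τ) * B (y - c) (y - c) - (f y - f c - ℓ (y - c)))
      ≤ f x + g x + 1 / (2 * τ) * B (x - c) (x - c) + ε
        + √(2 * ε * τ) / τ * √(B (x - y) (x - y)) := by
  let φ : E → ℝ := fun z => g z + ℓ z + (f c - ℓ c)
  have hφ : ConvexOn ℝ s φ := (hg.add (ℓ.convexOn hg.1)).add_const _
  have hscale (u : E) : 1 / 2 * (τ⁻¹ • B) u u = 1 / (2 * τ) * B u u := by
    simp only [LinearMap.smul_apply, smul_eq_mul]
    ring
  have hmodel (z : E) : quadraticModel f ℓ B τ c z + g z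
      = φ z + 1 / 2 * (τ⁻¹ • B) (z - c) (z - c) := by
    simp only [quadraticModel, φ, map_sub ℓ, hscale]
    ring
  simp only [hmodel] at hmin hyε
  have hthree := inexact_prox_three_point (hB.smul (inv_nonneg.2 hτ.le)) hφ hp hmin hy hyε hx
  have hsqrt : √(2 * ε) * √((τ⁻¹ • B) (x - y) (x - y))
      = √(2 * ε * τ) / τ * √(B (x - y) (x - y)) := by
    rw [LinearMap.smul_apply, LinearMap.smul_apply, smul_eq_mul,
      Real.sqrt_mul (inv_nonneg.2 hτ.le), Real.sqrt_inv, ← Real.sqrt_div_self,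
      Real.sqrt_mul' _ hτ.le]
    ring
  simp only [hscale, hsqrt, φ] at hthree
  rw [map_sub ℓ] at hf ⊢
  linarith

end ForwardBackwardStep

section ExtendedReal

variable {E : Type*} [AddCommGroup E] [Module ℝ E]

lemma convexOn_toReal_of_ereal_convex {g : E → EReal} (hg_ne_bot : ∀ x, g x ≠ ⊥)
    (hg_convex : ∀ x y : E, ∀ lam : ℝ, 0 ≤ lam → lam ≤ 1 →
      g (lam • x + (1 - lam) • y) ≤ (lam : EReal) * g x + ((1 - lam : ℝ) : EReal) * g y) :
    ConvexOn ℝ {x | g x ≠ ⊤} (fun x => (g x).toReal) := by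
  have hle {x y : E} (hx : g x ≠ ⊤) (hy : g y ≠ ⊤) {a b : ℝ} (ha : 0 ≤ a) (hb : 0 ≤ b)
      (hab : a + b = 1) :
      g (a • x + b • y) ≤ ((a * (g x).toReal + b * (g y).toReal : ℝ) : EReal) := by
    obtain rfl : b = 1 - a := by linarith
    have hconv := hg_convex x y a ha (by linarith)
    rwa [← EReal.coe_toReal hx (hg_ne_bot x), ← EReal.coe_toReal hy (hg_ne_bot y),
      ← EReal.coe_mul, ← EReal.coe_mul, ← EReal.coe_add] at hconv
  refine ⟨fun x hx y hy a b ha hb hab => ?_, fun x hx y hy a b ha hb hab => ?_⟩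
  · exact ne_top_of_le_ne_top (EReal.coe_ne_top _) (hle hx hy ha hb hab)
  · simpa only [EReal.toReal_coe, smul_eq_mul] using
      EReal.toReal_le_toReal (hle hx hy ha hb hab) (hg_ne_bot _) (EReal.coe_ne_top _)

theorem inexact_scaled_descent_inequality_general {f : E → ℝ} {ℓ : E →ₗ[ℝ] ℝ} {g : E → EReal}
    {B : LinearMap.BilinForm ℝ E} {τ ε : ℝ} {xbar xhat xtil : E}
    (hf : ∀ x, g x ≠ ⊤ → f xbar + ℓ (x - xbar) ≤ f x)
    (hg_ne_bot : ∀ x, g x ≠ ⊥)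
    (hg_convex : ∀ x y : E, ∀ lam : ℝ, 0 ≤ lam → lam ≤ 1 →
      g (lam • x + (1 - lam) • y) ≤ (lam : EReal) * g x + ((1 - lam : ℝ) : EReal) * g y)
    (hτ : 0 < τ) (hB : B.IsPosSemidef)
    (hxhat_min : ∀ z, (quadraticModel f ℓ B τ xbar xhat : EReal) + g xhat
      ≤ (quadraticModel f ℓ B τ xbar z : EReal) + g z)
    (hxtil_dom : g xtil ≠ ⊤)
    (hxtil_approx : (quadraticModel f ℓ B τ xbar xtil : EReal) + g xtil
      ≤ (quadraticModel f ℓ B τ xbar xhat : EReal) + g xhat + (ε : EReal)) (x : E) :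
    ((f xtil : EReal) + g xtil)
        + ((1 / (2 * τ) * B (x - xtil) (x - xtil) : ℝ) : EReal)
        + ((1 / (2 * τ) * B (xtil - xbar) (xtil - xbar)
            - (f xtil - f xbar - ℓ (xtil - xbar)) : ℝ) : EReal)
      ≤ ((f x : EReal) + g x)
        + ((1 / (2 * τ) * B (x - xbar) (x - xbar) : ℝ) : EReal)
        + (ε : EReal)
        + ((√(2 * ε * τ) / τ * √(B (x - xtil) (x - xtil)) : ℝ) : EReal) := by
  have hg_coe {z : E} (hz : g z ≠ ⊤) : g z = ((g z).toReal : EReal) :=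
    (EReal.coe_toReal hz (hg_ne_bot z)).symm
  by_cases hx : g x = ⊤
  · simp only [hx, EReal.coe_add_top, EReal.top_add_coe, le_top]
  have hxhat_dom : g xhat ≠ ⊤ := by
    intro htop
    have hle := hxhat_min xtil
    rw [htop, EReal.coe_add_top, hg_coe hxtil_dom, ← EReal.coe_add, top_le_iff] at hle
    exact EReal.coe_ne_top _ hle
  have hmin : IsMinOn (fun z => quadraticModel f ℓ B τ xbar z + (g z).toReal)
      {z | g z ≠ ⊤} xhat := isMinOn_iff.2 fun z hz => by
    have hle := hxhat_min z
    rw [hg_coe hxhat_dom, hg_coe hz] at hle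
    exact_mod_cast hle
  rw [hg_coe hxtil_dom, hg_coe hxhat_dom] at hxtil_approx
  rw [hg_coe hxtil_dom, hg_coe hx]
  exact_mod_cast inexact_forward_backward_descent (hf x hx)
    (convexOn_toReal_of_ereal_convex hg_ne_bot hg_convex) hτ hB hxhat_dom hmin hxtil_dom
    (by exact_mod_cast hxtil_approx) hx

end ExtendedReal

theorem linearization_le_of_convexOn {E : Type*} [NormedAddCommGroup E] [NormedSpace ℝ E]
    {s : Set E} {f : E → ℝ} {f' : E →L[ℝ] ℝ} {x y : E} (hf : ConvexOn ℝ s f)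
    (hf' : HasFDerivWithinAt f f' s y) (hy : y ∈ s) (hx : x ∈ s) :
    f y + f' (x - y) ≤ f x := by
  let line : ℝ →ᵃ[ℝ] E := AffineMap.lineMap y x
  have h0 : line 0 = y := AffineMap.lineMap_apply_zero y x
  have h1 : line 1 = x := AffineMap.lineMap_apply_one y x
  have hderiv : HasDerivWithinAt (f ∘ line) (f' (x - y)) (line ⁻¹' s) 0 :=
    HasFDerivWithinAt.comp_hasDerivWithinAt (t := s) 0 (by rwa [h0])
      AffineMap.hasDerivWithinAt_lineMap (Set.mapsTo_preimage line s)
  have hslope := (hf.comp_affineMap line).le_slope_of_hasDerivWithinAt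
    (by rwa [Set.mem_preimage, h0]) (by rwa [Set.mem_preimage, h1]) one_pos hderiv
  rw [slope_def_field, Function.comp_apply, Function.comp_apply, h0, h1, sub_zero, div_one]
    at hslope
  linarith

lemma isPosSemidef_innerₗ_comp {H : Type*} [NormedAddCommGroup H] [InnerProductSpace ℝ H]
    {D : H →ₗ[ℝ] H} (hD : D.IsPositive) :
    LinearMap.BilinForm.IsPosSemidef (innerₗ H ∘ₗ D) where
  eq x y := (hD.1 x y).trans (real_inner_comm _ _)
  nonneg := hD.2

/-- **Scaled inexact descent inequality (Lemma 2.3 of SAGE-FISTA).**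
`g : H → EReal` is the proper convex lsc extended-real-valued function, `f` the smooth
convex part with gradient `f'` which is `L_f`-Lipschitz on `Y`, and `D` a bounded
self-adjoint operator with `ηinf • I ⪯ D ⪯ ηsup • I`.  `h z = h_{τ,D}(z; x̄)`,
`x̂` its (unique) minimizer, and `x̃` an `ε`-approximation of `x̂`. -/
theorem inexact_scaled_descent_inequality
    {H : Type*} [NormedAddCommGroup H] [InnerProductSpace ℝ H] [CompleteSpace H]
    (Y : Set H) (hY_ne : Y.Nonempty) (hY_closed : IsClosed Y) (hY_convex : Convex ℝ Y)
    (f : H → ℝ) (f' : H → H) (L_f : ℝ)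
    (hf_convex : ConvexOn ℝ Set.univ f)
    (hf_grad : ∀ x : H, HasGradientAt f (f' x) x)
    (hf'_cont : Continuous f')
    (hf'_lip : ∀ x ∈ Y, ∀ y ∈ Y, ‖f' x - f' y‖ ≤ L_f * ‖x - y‖)
    (g : H → EReal)
    (hg_ne_bot : ∀ x : H, g x ≠ ⊥)
    (hg_proper : ∃ x : H, g x ≠ ⊤)
    (hg_convex : ∀ x y : H, ∀ lam : ℝ, 0 ≤ lam → lam ≤ 1 →
      g (lam • x + (1 - lam) • y) ≤ (lam : EReal) * g x + ((1 - lam : ℝ) : EReal) * g y)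
    (hg_lsc : LowerSemicontinuous g)
    (hdom : ∀ x : H, g x ≠ ⊤ → x ∈ Y)
    (xbar : H) (hxbar : xbar ∈ Y)
    (τ : ℝ) (hτ : 0 < τ)
    (D : H →L[ℝ] H)
    (hD_sa : ∀ x y : H, ⟪D x, y⟫ = ⟪x, D y⟫)
    (ηinf ηsup : ℝ) (hη0 : 0 < ηinf) (hηle : ηinf ≤ ηsup)
    (hD_lb : ∀ x : H, ηinf * ‖x‖ ^ 2 ≤ ⟪D x, x⟫)
    (hD_ub : ∀ x : H, ⟪D x, x⟫ ≤ ηsup * ‖x‖ ^ 2)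
    (ε : ℝ) (hε : 0 ≤ ε)
    (h : H → EReal)
    (h_def : ∀ z : H, h z =
      ((f xbar + ⟪f' xbar, z - xbar⟫ + (1 / (2 * τ)) * ⟪D (z - xbar), z - xbar⟫ : ℝ) : EReal)
        + g z)
    (xhat : H) (hxhat_min : ∀ z : H, h xhat ≤ h z)
    (xtil : H) (hxtil_dom : g xtil ≠ ⊤)
    (hxtil_approx : h xtil ≤ h xhat + (ε : EReal)) :
    ∀ x : H,
      ((f xtil : EReal) + g xtil)
        + (((1 / (2 * τ)) * ⟪D (x - xtil), x - xtil⟫ : ℝ) : EReal)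
        + (((1 / (2 * τ)) * ⟪D (xtil - xbar), xtil - xbar⟫
            - (f xtil - f xbar - ⟪f' xbar, xtil - xbar⟫) : ℝ) : EReal)
      ≤ ((f x : EReal) + g x)
        + (((1 / (2 * τ)) * ⟪D (x - xbar), x - xbar⟫ : ℝ) : EReal)
        + (ε : EReal)
        + ((Real.sqrt (2 * ε * τ) / τ * Real.sqrt ⟪D (x - xtil), x - xtil⟫ : ℝ) : EReal) := by
  obtain rfl : h = _ := funext h_def
  exact inexact_scaled_descent_inequality_general (ℓ := innerₗ H (f' xbar))
    (B := innerₗ H ∘ₗ (D : H →ₗ[ℝ] H))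
    (fun x _ => linearization_le_of_convexOn hf_convex
      (hf_grad xbar).hasFDerivAt.hasFDerivWithinAt (Set.mem_univ _) (Set.mem_univ x))
    hg_ne_bot hg_convex hτ
    (isPosSemidef_innerₗ_comp ⟨hD_sa, fun x => le_trans (by positivity) (hD_lb x)⟩)
    hxhat_min hxtil_dom hxtil_approx
end

section
/- Let H be a real Hilbert space, η > 0, and let {ν_inf^k}_{k∈ℕ} and {ν_sup^k}_{k∈ℕ} be sequences of reals with 0 ≤ ν_inf^k < η, ν_sup^k ≥ 0, Σ_k ν_inf^k < ∞ and Σ_k ν_sup^k < ∞. Let {D_k}_{k∈ℕ} be a sequence of bounded self-adjoint linear operators on H with (η − ν_inf^k)·I ⪯ D_k ⪯ (η + ν_sup^k)·I for all k ≥ 0. Then there exists a sequence of nonnegative reals {γ_k}_{k∈ℕ} with Σ_{k=0}^∞ γ_k < +∞ such that D_{k+1} ⪯ (1 + γ_{k+1})·D_k for all k ≥ 0. -/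
open scoped RealInnerProductSpace

/-!
The upper bound for `D (k + 1)` exceeds the lower bound for `D k` by `νsup (k + 1) + νinf k`, which
is summable. Since `D k` dominates `η - νinf k` times the identity, this excess is absorbed by
multiplying `D k` by one plus the relative excess `|νsup (k + 1) + νinf k| / (η - νinf k)`, and the
relative excess stays summable because the denominators tend to `η > 0`. Only the order and the
scalar action enter: a nonnegative element `e` can replace the identity, and operators may be
identified with their quadratic forms, for which `e` is `x ↦ ‖x‖ ^ 2`.
-/

open Filter Topology

theorem le_smul_of_le_smul_of_smul_le {R M : Type*} [MonoidWithZero R] [Preorder R]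
    [Zero M] [Preorder M] [MulAction R M] [PosSMulMono R M] [SMulPosMono R M]
    {a b c : R} {e x y : M} (he : 0 ≤ e) (hc : 0 ≤ c) (hbc : b ≤ c * a)
    (hx : x ≤ b • e) (hy : a • e ≤ y) : x ≤ c • y :=
  calc
    x ≤ b • e := hx
    _ ≤ (c * a) • e := smul_le_smul_of_nonneg_right hbc he
    _ = c • a • e := mul_smul c a e
    _ ≤ c • y := smul_le_smul_of_nonneg_left hy hc

theorem le_one_add_abs_sub_div_mul {𝕜 : Type*} [Field 𝕜] [LinearOrder 𝕜] [IsStrictOrderedRing 𝕜]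
    {a : 𝕜} (ha : 0 < a) (b : 𝕜) : b ≤ (1 + |b - a| / a) * a :=
  calc
    b = a + (b - a) := (add_sub_cancel a b).symm
    _ ≤ a + |b - a| := by gcongr; exact le_abs_self (b - a)
    _ = (1 + |b - a| / a) * a := by rw [add_mul, one_mul, div_mul_cancel₀ _ ha.ne']

theorem summable_div_of_tendsto_cofinite {ι 𝕜 : Type*} [NormedField 𝕜] [CompleteSpace 𝕜]
    {f g : ι → 𝕜} {c : 𝕜} (hf : Summable fun i => ‖f i‖) (hg : Tendsto g cofinite (𝓝 c))
    (hc : c ≠ 0) : Summable fun i => f i / g i := by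
  simpa only [div_eq_mul_inv] using hf.mul_tendsto_const (hg.inv₀ hc)

theorem summable_spectral_bounds_imply_metric_ordering_general
    {M : Type*} [Zero M] [Preorder M] [MulAction ℝ M] [PosSMulMono ℝ M] [SMulPosMono ℝ M]
    {e : M} (he : 0 ≤ e) {η : ℝ} (hη : 0 < η) {νinf νsup : ℕ → ℝ} (hνinf : ∀ k, νinf k < η)
    (hsum_inf : Summable νinf) (hsum_sup : Summable νsup) {D : ℕ → M}
    (hD_lb : ∀ k, (η - νinf k) • e ≤ D k) (hD_ub : ∀ k, D k ≤ (η + νsup k) • e) :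
    ∃ γ : ℕ → ℝ, (∀ k, 0 ≤ γ k) ∧ Summable γ ∧ ∀ k, D (k + 1) ≤ (1 + γ (k + 1)) • D k := by
  have hpos (k : ℕ) : 0 < η - νinf k := sub_pos.2 (hνinf k)
  -- The truncated subtraction `0 - 1` only affects `γ 0`, which the ordering never involves.
  let γ (k : ℕ) : ℝ := |(η + νsup k) - (η - νinf (k - 1))| / (η - νinf (k - 1))
  have hγ_nonneg (k : ℕ) : 0 ≤ γ k := div_nonneg (abs_nonneg _) (hpos (k - 1)).le
  refine ⟨γ, hγ_nonneg, (summable_nat_add_iff 1).1 ?_, fun k => ?_⟩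
  · have hexcess : Summable fun k => (η + νsup (k + 1)) - (η - νinf k) := by
      simpa only [add_sub_sub_cancel] using ((summable_nat_add_iff 1).2 hsum_sup).add hsum_inf
    have hlower : Tendsto (fun k => η - νinf k) cofinite (𝓝 η) := by
      simpa only [sub_zero] using hsum_inf.tendsto_cofinite_zero.const_sub η
    exact summable_div_of_tendsto_cofinite hexcess.abs.abs hlower hη.ne'
  · exact le_smul_of_le_smul_of_smul_le he (add_nonneg zero_le_one (hγ_nonneg (k + 1)))
      (le_one_add_abs_sub_div_mul (hpos k) (η + νsup (k + 1))) (hD_ub (k + 1)) (hD_lb k)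

/-- **Summable spectral perturbations imply the variable-metric ordering condition:**
if `(η − ν_inf^k)·I ⪯ D_k ⪯ (η + ν_sup^k)·I` with `0 ≤ ν_inf^k < η`, `ν_sup^k ≥ 0`, and both
sequences summable, then there are nonnegative summable `γ_k` with
`D_{k+1} ⪯ (1 + γ_{k+1})·D_k` for all `k`. -/
theorem summable_spectral_bounds_imply_metric_ordering
    {H : Type*} [NormedAddCommGroup H] [InnerProductSpace ℝ H]
    (η : ℝ) (hη : 0 < η)
    (νinf νsup : ℕ → ℝ)
    (hνinf : ∀ k, 0 ≤ νinf k ∧ νinf k < η)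
    (hνsup : ∀ k, 0 ≤ νsup k)
    (hsum_inf : Summable νinf) (hsum_sup : Summable νsup)
    (D : ℕ → H →L[ℝ] H)
    (hD_sa : ∀ (k : ℕ) (x y : H), ⟪D k x, y⟫ = ⟪x, D k y⟫)
    (hD_lb : ∀ (k : ℕ) (x : H), (η - νinf k) * ‖x‖ ^ 2 ≤ ⟪D k x, x⟫)
    (hD_ub : ∀ (k : ℕ) (x : H), ⟪D k x, x⟫ ≤ (η + νsup k) * ‖x‖ ^ 2) :
    ∃ γ : ℕ → ℝ, (∀ k, 0 ≤ γ k) ∧ Summable γ ∧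
      ∀ (k : ℕ) (x : H), ⟪D (k + 1) x, x⟫ ≤ (1 + γ (k + 1)) * ⟪D k x, x⟫ := by
  exact summable_spectral_bounds_imply_metric_ordering_general (e := fun x : H => ‖x‖ ^ 2)
    (D := fun k x => ⟪D k x, x⟫) (fun x => sq_nonneg ‖x‖) hη (fun k => (hνinf k).2)
    hsum_inf hsum_sup hD_lb hD_ub
end

section
/- Let {τ_k}_{k∈ℕ} be a sequence of positive reals and let {t_k}_{k∈ℕ} satisfy t₀ ≥ 1 and t_{k+1} = (1 + √(1 + 4(τ_k/τ_{k+1})·t_k²))/2 for all k ≥ 0. Then for all k ≥ 0: √(τ_k)·t_k ≥ √(τ₀)·t₀ + (1/2)·Σ_{i=1}^{k} √(τ_i); in particular √(τ_k)·t_k ≥ (1/2)·Σ_{i=0}^{k} √(τ_i). -/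
/-!
Dropping the `1` under the root of the recursion gives
`t (k + 1) ≥ 1 / 2 + √(τ k / τ (k + 1)) * t k`. Multiplied by `√(τ (k + 1))`, this says that
`√(τ k) * t k` grows by at least `√(τ (k + 1)) / 2` at step `k`, and these increments telescope.
-/

theorem add_sum_Icc_one_le_of_add_le_succ {M : Type*} [AddCommMonoid M] [Preorder M]
    [AddRightMono M] {u v : ℕ → M} (h : ∀ k, u k + v (k + 1) ≤ u (k + 1)) (k : ℕ) :
    u 0 + ∑ i ∈ Finset.Icc 1 k, v i ≤ u k := by
  induction k with
  | zero => simp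
  | succ k ih =>
    calc u 0 + ∑ i ∈ Finset.Icc 1 (k + 1), v i
        = u 0 + ∑ i ∈ Finset.Icc 1 k, v i + v (k + 1) := by
          rw [Finset.sum_Icc_succ_top (Nat.le_add_left 1 k), add_assoc]
      _ ≤ u k + v (k + 1) := by gcongr
      _ ≤ u (k + 1) := h k

theorem two_mul_sqrt_mul_le_sqrt_one_add {c : ℝ} (hc : 0 ≤ c) (s : ℝ) :
    2 * (√c * s) ≤ √(1 + 4 * c * s ^ 2) := by
  apply Real.le_sqrt_of_sq_le
  calc (2 * (√c * s)) ^ 2 = 4 * c * s ^ 2 := by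
        rw [mul_pow, mul_pow, Real.sq_sqrt hc]
        ring
    _ ≤ 1 + 4 * c * s ^ 2 := le_add_of_nonneg_left zero_le_one

theorem sqrt_mul_add_half_sqrt_le {a b : ℝ} (ha : 0 ≤ a) (hb : 0 < b) (s : ℝ) :
    √a * s + 1 / 2 * √b ≤ √b * ((1 + √(1 + 4 * (a / b) * s ^ 2)) / 2) := by
  have hsqrt : √b * √(a / b) = √a := by
    rw [← Real.sqrt_mul hb.le, mul_div_cancel₀ a hb.ne']
  calc √a * s + 1 / 2 * √b = √b * ((1 + 2 * (√(a / b) * s)) / 2) := by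
        rw [← hsqrt]
        ring
    _ ≤ √b * ((1 + √(1 + 4 * (a / b) * s ^ 2)) / 2) := by
        gcongr
        exact two_mul_sqrt_mul_le_sqrt_one_add (div_nonneg ha hb.le) s

theorem sfista_sqrt_tau_t_growth_general {τ t : ℕ → ℝ} (hτ : ∀ k, 0 < τ k)
    (ht_rec : ∀ k, (1 + √(1 + 4 * (τ k / τ (k + 1)) * t k ^ 2)) / 2 ≤ t (k + 1)) (k : ℕ) :
    √(τ 0) * t 0 + 1 / 2 * ∑ i ∈ Finset.Icc 1 k, √(τ i) ≤ √(τ k) * t k ∧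
      (1 / 2 ≤ t 0 → 1 / 2 * ∑ i ∈ Finset.range (k + 1), √(τ i) ≤ √(τ k) * t k) := by
  have step (j : ℕ) : √(τ j) * t j + 1 / 2 * √(τ (j + 1)) ≤ √(τ (j + 1)) * t (j + 1) :=
    (sqrt_mul_add_half_sqrt_le (hτ j).le (hτ (j + 1)) (t j)).trans
      (mul_le_mul_of_nonneg_left (ht_rec j) (Real.sqrt_nonneg _))
  have growth : √(τ 0) * t 0 + 1 / 2 * ∑ i ∈ Finset.Icc 1 k, √(τ i) ≤ √(τ k) * t k := by
    rw [Finset.mul_sum]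
    exact add_sum_Icc_one_le_of_add_le_succ
      (u := fun j => √(τ j) * t j) (v := fun j => 1 / 2 * √(τ j)) step k
  refine ⟨growth, fun ht0 => ?_⟩
  calc 1 / 2 * ∑ i ∈ Finset.range (k + 1), √(τ i)
      = √(τ 0) * (1 / 2) + 1 / 2 * ∑ i ∈ Finset.Icc 1 k, √(τ i) := by
        rw [Finset.sum_range_eq_add_Ico _ k.add_one_pos, Finset.Ico_add_one_right_eq_Icc]
        ring
    _ ≤ √(τ 0) * t 0 + 1 / 2 * ∑ i ∈ Finset.Icc 1 k, √(τ i) := by gcongr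
    _ ≤ √(τ k) * t k := growth

/-- **Growth estimate for `√(τ_k)·t_k`:** with `t₀ ≥ 1` and
`t_{k+1} = (1 + √(1 + 4(τ_k/τ_{k+1})t_k²))/2`, one has
`√(τ_k) t_k ≥ √(τ₀) t₀ + (1/2)∑_{i=1}^k √(τ_i)`, and in particular
`√(τ_k) t_k ≥ (1/2)∑_{i=0}^k √(τ_i)`. -/
theorem sfista_sqrt_tau_t_growth
    (τ t : ℕ → ℝ)
    (hτ : ∀ k, 0 < τ k)
    (ht0 : 1 ≤ t 0)
    (ht_rec : ∀ k : ℕ,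
      t (k + 1) = (1 + Real.sqrt (1 + 4 * (τ k / τ (k + 1)) * (t k) ^ 2)) / 2) :
    ∀ k : ℕ,
      Real.sqrt (τ 0) * t 0 + (1 / 2) * ∑ i ∈ Finset.Icc 1 k, Real.sqrt (τ i)
          ≤ Real.sqrt (τ k) * t k ∧
      (1 / 2) * ∑ i ∈ Finset.range (k + 1), Real.sqrt (τ i)
          ≤ Real.sqrt (τ k) * t k :=
  fun k => (sfista_sqrt_tau_t_growth_general hτ (fun j => (ht_rec j).ge) k).imp_right
    fun half_bound => half_bound (one_half_lt_one.le.trans ht0)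
end

section
/- Let n ∈ ℕ, let z ∈ ℝⁿ with z ≥ 0 componentwise, b ∈ ℝⁿ with b > 0 componentwise, and let H ∈ ℝ^{n×n} have nonnegative entries with He > 0 and Hᵀe > 0 componentwise, where e ∈ ℝⁿ is the vector of all ones. Then the function f(x) := KL(Hx + b; z) := Σ_{i=1}^n ( z_i·log(z_i/((Hx)_i + b_i)) + (Hx)_i + b_i − z_i ) (convention 0·log 0 = 0) is coercive on the nonnegative orthant: for every sequence {x^(j)} with x^(j) ≥ 0 componentwise and ‖x^(j)‖ → ∞, one has f(x^(j)) → +∞. -/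
open Matrix Filter

/-!
The linear part of the divergence dominates its logarithmic part: replacing `y` by `y / 2` in
`KL(y; z)` lowers it by `(∑ i, y i) / 2` up to a constant, and the result is still nonnegative.
So it is enough that `∑ i, y i → ∞` for `y = A x + b`. Here `∑ i, (A x) i` is the linear functional
of `x` whose coefficients are the column sums of `A`, and since these are positive it dominates
a multiple of `‖x‖` on the nonnegative orthant.
-/

section GenKLDiv

variable {ι : Type*} [Fintype ι] {z y : ι → ℝ}

/-- The generalized Kullback–Leibler divergence `KL(y; z)` of nonnegative data `z` from a positive
model `y`. Where `z i = 0` the logarithmic term vanishes, which is the convention `0 log 0 = 0`;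
where `y i = 0` it vanishes too, so the case `z i > 0 = y i` takes a junk value instead of `+∞`. -/
noncomputable def genKLDiv (z y : ι → ℝ) : ℝ :=
  ∑ i, (z i * Real.log (z i / y i) + y i - z i)

lemma genKLDiv_eq_sum_mul_klFun (hy : ∀ i, y i ≠ 0) :
    genKLDiv z y = ∑ i, y i * InformationTheory.klFun (z i / y i) := by
  refine Finset.sum_congr rfl fun i _ => ?_
  have hyi : y i ≠ 0 := hy i
  rw [InformationTheory.klFun_apply]
  field_simp

lemma genKLDiv_nonneg (hz : 0 ≤ z) (hy : ∀ i, 0 < y i) : 0 ≤ genKLDiv z y := by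
  rw [genKLDiv_eq_sum_mul_klFun fun i => (hy i).ne']
  exact Finset.sum_nonneg fun i _ =>
    mul_nonneg (hy i).le (InformationTheory.klFun_nonneg (div_nonneg (hz i) (hy i).le))

lemma genKLDiv_smul {c : ℝ} (hc : c ≠ 0) (hy : ∀ i, y i ≠ 0) :
    genKLDiv z (c • y) = genKLDiv z y + (c - 1) * ∑ i, y i - Real.log c * ∑ i, z i := by
  simp only [genKLDiv, Finset.mul_sum, ← Finset.sum_add_distrib, ← Finset.sum_sub_distrib,
    Pi.smul_apply, smul_eq_mul]
  refine Finset.sum_congr rfl fun i _ => ?_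
  rcases eq_or_ne (z i) 0 with hzi | hzi
  · rw [hzi]
    ring
  · rw [Real.log_div hzi (mul_ne_zero hc (hy i)), Real.log_mul hc (hy i),
      Real.log_div hzi (hy i)]
    ring

lemma half_sum_sub_le_genKLDiv (hz : 0 ≤ z) (hy : ∀ i, 0 < y i) :
    (∑ i, y i) / 2 - Real.log 2 * ∑ i, z i ≤ genKLDiv z y := by
  have hhalf : 0 ≤ genKLDiv z ((2⁻¹ : ℝ) • y) :=
    genKLDiv_nonneg hz fun i => mul_pos (by norm_num) (hy i)
  rw [genKLDiv_smul (by norm_num) fun i => (hy i).ne', Real.log_inv] at hhalf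
  linarith

lemma tendsto_genKLDiv_atTop {α : Type*} {l : Filter α} {y : α → ι → ℝ} (hz : 0 ≤ z)
    (hy : ∀ᶠ a in l, ∀ i, 0 < y a i) (hsum : Tendsto (fun a => ∑ i, y a i) l atTop) :
    Tendsto (fun a => genKLDiv z (y a)) l atTop :=
  tendsto_atTop_mono' l (hy.mono fun _ => half_sum_sub_le_genKLDiv hz)
    (tendsto_atTop_add_const_right l _ (hsum.atTop_div_const two_pos))

end GenKLDiv

lemma sum_mulVec_eq_transpose_mulVec_one_dotProduct {ι κ R : Type*} [Fintype ι] [Fintype κ]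
    [CommSemiring R] (A : Matrix ι κ R) (x : κ → R) :
    ∑ i, (A *ᵥ x) i = (Aᵀ *ᵥ 1) ⬝ᵥ x := by
  rw [← one_dotProduct, dotProduct_mulVec, mulVec_transpose]

lemma mulVec_nonneg_of_nonneg {ι κ R : Type*} [Fintype κ] [Semiring R] [PartialOrder R]
    [IsOrderedRing R] {A : Matrix ι κ R} {x : κ → R} (hA : ∀ i j, 0 ≤ A i j) (hx : 0 ≤ x) :
    0 ≤ A *ᵥ x :=
  fun i => dotProduct_nonneg_of_nonneg (hA i) hx

section Lp

variable {κ : Type*} [Fintype κ] {p : ENNReal} [Fact (1 ≤ p)]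

lemma piLp_norm_le_sum_norm {E : κ → Type*} [∀ k, SeminormedAddCommGroup (E k)] (x : PiLp p E) :
    ‖x‖ ≤ ∑ k, ‖x k‖ := by
  classical
  calc ‖x‖ = ‖∑ k, PiLp.single p k (x k)‖ := by
        congr 1
        ext k
        simp
    _ ≤ ∑ k, ‖PiLp.single p k (x k)‖ := norm_sum_le _ _
    _ = ∑ k, ‖x k‖ := by simp only [PiLp.norm_single]

lemma exists_pos_mul_norm_le_dotProduct {c : κ → ℝ} (hc : ∀ k, 0 < c k) :
    ∃ δ > 0, ∀ x : PiLp p (fun _ : κ => ℝ), 0 ≤ x.ofLp → δ * ‖x‖ ≤ c ⬝ᵥ x.ofLp := by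
  obtain ⟨δ, hδ, hδc⟩ := Pi.exists_forall_pos_add_lt hc
  refine ⟨δ, hδ, fun x hx => ?_⟩
  calc δ * ‖x‖ ≤ δ * ∑ k, ‖x k‖ := by gcongr; exact piLp_norm_le_sum_norm x
    _ = (fun _ => δ) ⬝ᵥ x.ofLp := by
        simp only [Finset.mul_sum, dotProduct, Real.norm_of_nonneg (hx _)]
    _ ≤ c ⬝ᵥ x.ofLp :=
        dotProduct_le_dotProduct_of_nonneg_right (fun k => by simpa using (hδc k).le) hx

lemma tendsto_dotProduct_cobounded_inf_nonneg_atTop {c : κ → ℝ} (hc : ∀ k, 0 < c k) :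
    Tendsto (fun x : PiLp p (fun _ : κ => ℝ) => c ⬝ᵥ x.ofLp)
      (Bornology.cobounded _ ⊓ 𝓟 {x | 0 ≤ x.ofLp}) atTop := by
  obtain ⟨δ, hδ, hle⟩ := exists_pos_mul_norm_le_dotProduct (p := p) hc
  exact tendsto_atTop_mono' _ (mem_inf_of_right hle)
    ((tendsto_norm_cobounded_atTop.mono_left inf_le_left).const_mul_atTop hδ)

end Lp

theorem KL_coercive_on_nonneg_orthant_general {ι κ : Type*} [Fintype ι] [Fintype κ]
    {p : ENNReal} [Fact (1 ≤ p)] {z b : ι → ℝ} {A : Matrix ι κ ℝ} (hz : 0 ≤ z)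
    (hb : ∀ i, 0 < b i) (hA : ∀ i j, 0 ≤ A i j) (hATe : ∀ j, 0 < (Aᵀ *ᵥ 1) j) :
    Tendsto (fun x : PiLp p (fun _ : κ => ℝ) => genKLDiv z (A *ᵥ x.ofLp + b))
      (Bornology.cobounded _ ⊓ 𝓟 {x | 0 ≤ x.ofLp}) atTop := by
  refine tendsto_genKLDiv_atTop hz (mem_inf_of_right fun x hx i => ?_) ?_
  · exact add_pos_of_nonneg_of_pos (mulVec_nonneg_of_nonneg hA hx i) (hb i)
  · simp only [Pi.add_apply, Finset.sum_add_distrib, sum_mulVec_eq_transpose_mulVec_one_dotProduct]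
    exact tendsto_atTop_add_const_right _ _ (tendsto_dotProduct_cobounded_inf_nonneg_atTop hATe)

/-- **Coercivity of the generalized Kullback–Leibler data fidelity
`x ↦ KL(Hx + b; z)` on the nonnegative orthant:** along any sequence of nonnegative
vectors whose norms tend to `+∞`, the function values tend to `+∞`. -/
theorem KL_coercive_on_nonneg_orthant
    (n : ℕ) (z b : Fin n → ℝ) (A : Matrix (Fin n) (Fin n) ℝ)
    (hz : ∀ i, 0 ≤ z i) (hb : ∀ i, 0 < b i)
    (hA : ∀ i j, 0 ≤ A i j)
    (hAe : ∀ i, 0 < A.mulVec (fun _ => 1) i)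
    (hATe : ∀ j, 0 < A.transpose.mulVec (fun _ => 1) j)
    (x : ℕ → EuclideanSpace ℝ (Fin n))
    (hx_nonneg : ∀ (j : ℕ) (i : Fin n), 0 ≤ x j i)
    (hx_norm : Tendsto (fun j => ‖x j‖) atTop atTop) :
    Tendsto (fun j => ∑ i, (z i * Real.log (z i / (A.mulVec (fun i' => x j i') i + b i))
        + (A.mulVec (fun i' => x j i') i + b i) - z i)) atTop atTop := by
  exact (KL_coercive_on_nonneg_orthant_general hz hb hA hATe).comp <| tendsto_inf.2
    ⟨tendsto_norm_atTop_iff_cobounded.1 hx_norm, tendsto_principal.2 (.of_forall hx_nonneg)⟩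
end

section
/- Let n ∈ ℕ, let z ∈ ℝⁿ with z ≥ 0 componentwise, let β > 0 be a constant scalar background, and let H ∈ ℝ^{n×n} have nonnegative entries. Define, for x ∈ ℝⁿ with x ≥ 0 componentwise, f(x) := KL(Hx + βe; z) := Σ_{i=1}^n ( z_i·log(z_i/((Hx)_i + β)) + (Hx)_i + β − z_i ) (convention 0·log 0 = 0), where e ∈ ℝⁿ is the vector of all ones. Then: (i) the gradient of f at any x ≥ 0 is ∇f(x) = Hᵀe − Hᵀ( z ⊘ (Hx + βe) ), where ⊘ denotes componentwise division; (ii) ∇f is Lipschitz continuous on the nonnegative orthant with Lipschitz constant L_f = (max_i z_i / β²)·(max_i (Hᵀe)_i)·(max_i (He)_i), i.e. ‖∇f(x) − ∇f(y)‖₂ ≤ L_f·‖x − y‖₂ for all x, y ≥ 0 componentwise. -/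
/-!
The gradient of the fidelity is `Aᵀ` applied to the derivatives `1 - z i / t` of the scalar
divergences, evaluated at `t = (A x) i + b i`. For `t ≥ β` such a derivative has Lipschitz constant
`z i / β²`, so the gradient, being a composition `Aᵀ ∘ φ ∘ A` up to translations, has Lipschitz
constant `(max z / β²) ‖A‖₂²`. Cauchy–Schwarz with the weights `|A i j|` bounds `‖A‖₂²` by the
largest column sum times the largest row sum.
-/

open Matrix

open WithLp (toLp)

open scoped Matrix.Norms.L2Operator

section L2OpNorm

variable {m n 𝕜 : Type*} [Fintype n] [RCLike 𝕜]

lemma norm_mulVec_apply_sq_le (A : Matrix m n 𝕜) (v : n → 𝕜) (i : m) :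
    ‖(A *ᵥ v) i‖ ^ 2 ≤ (∑ j, ‖A i j‖) * ∑ j, ‖A i j‖ * ‖v j‖ ^ 2 := by
  calc ‖(A *ᵥ v) i‖ ^ 2 ≤ (∑ j, ‖A i j‖ * ‖v j‖) ^ 2 := by
        gcongr
        exact norm_sum_le_of_le _ fun j _ => norm_mul_le _ _
    _ ≤ (∑ j, ‖A i j‖) * ∑ j, ‖A i j‖ * ‖v j‖ ^ 2 :=
        Finset.sum_sq_le_sum_mul_sum_of_sq_le_mul _ (fun _ _ => norm_nonneg _)
          (fun _ _ => by positivity) fun _ _ => le_of_eq (by ring)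

variable [Fintype m]

lemma sum_norm_mulVec_sq_le (A : Matrix m n 𝕜) (v : n → 𝕜) :
    ∑ i, ‖(A *ᵥ v) i‖ ^ 2 ≤
      (⨆ j, ∑ i, ‖A i j‖) * (⨆ i, ∑ j, ‖A i j‖) * ∑ j, ‖v j‖ ^ 2 := by
  set C := ⨆ j, ∑ i, ‖A i j‖
  set R := ⨆ i, ∑ j, ‖A i j‖
  have hC (j : n) : ∑ i, ‖A i j‖ ≤ C :=
    le_ciSup (f := fun j => ∑ i, ‖A i j‖) (Finite.bddAbove_range _) j
  have hR (i : m) : ∑ j, ‖A i j‖ ≤ R :=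
    le_ciSup (f := fun i => ∑ j, ‖A i j‖) (Finite.bddAbove_range _) i
  have hR₀ : 0 ≤ R := Real.iSup_nonneg fun i => by positivity
  calc ∑ i, ‖(A *ᵥ v) i‖ ^ 2
      ≤ ∑ i, (∑ j, ‖A i j‖) * ∑ j, ‖A i j‖ * ‖v j‖ ^ 2 := by
        gcongr with i
        exact norm_mulVec_apply_sq_le A v i
    _ ≤ ∑ i, R * ∑ j, ‖A i j‖ * ‖v j‖ ^ 2 := by
        gcongr with i
        exact hR i
    _ = R * ∑ j, (∑ i, ‖A i j‖) * ‖v j‖ ^ 2 := by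
        rw [← Finset.mul_sum, Finset.sum_comm]
        simp only [Finset.sum_mul]
    _ ≤ R * ∑ j, C * ‖v j‖ ^ 2 := by
        gcongr with j
        exact hC j
    _ = C * R * ∑ j, ‖v j‖ ^ 2 := by
        rw [← Finset.mul_sum]
        ring

variable [DecidableEq n]

lemma l2_opNorm_sq_le_iSup_col_mul_iSup_row (A : Matrix m n 𝕜) :
    ‖A‖ ^ 2 ≤ (⨆ j, ∑ i, ‖A i j‖) * ⨆ i, ∑ j, ‖A i j‖ := by
  have h_nonneg : 0 ≤ (⨆ j, ∑ i, ‖A i j‖) * ⨆ i, ∑ j, ‖A i j‖ :=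
    mul_nonneg (Real.iSup_nonneg fun _ => by positivity) (Real.iSup_nonneg fun _ => by positivity)
  rw [← Real.le_sqrt (norm_nonneg _) h_nonneg]
  rw [l2_opNorm_def]
  refine ContinuousLinearMap.opNorm_le_bound _ (Real.sqrt_nonneg _) fun v => ?_
  refine le_of_sq_le_sq ?_ (by positivity)
  rw [mul_pow, Real.sq_sqrt h_nonneg, EuclideanSpace.norm_sq_eq, EuclideanSpace.norm_sq_eq]
  exact sum_norm_mulVec_sq_le A v.ofLp

end L2OpNorm

section CompMulVec

variable {m n : Type*} [Fintype m] [Fintype n]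

lemma hasGradientAt_sum_comp_mulVec_add (A : Matrix m n ℝ) (b : m → ℝ) {φ : m → ℝ → ℝ}
    {φ' : m → ℝ} {x : EuclideanSpace ℝ n}
    (hφ : ∀ i, HasDerivAt (φ i) (φ' i) ((A *ᵥ x) i + b i)) :
    HasGradientAt (fun y : EuclideanSpace ℝ n => ∑ i, φ i ((A *ᵥ y) i + b i))
      (toLp 2 (Aᵀ *ᵥ φ')) x := by
  let row (i : m) : EuclideanSpace ℝ n := toLp 2 (A i)
  have h_row (i : m) (y : EuclideanSpace ℝ n) : (A *ᵥ y) i = innerSL ℝ (row i) y := by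
    simp [row, mulVec, dotProduct_comm, EuclideanSpace.inner_eq_star_dotProduct]
  have h_affine (i : m) : HasFDerivAt (fun y : EuclideanSpace ℝ n => (A *ᵥ y) i + b i)
      (innerSL ℝ (row i)) x := by
    simp only [h_row]
    exact (innerSL ℝ (row i)).hasFDerivAt.add_const (b i)
  have h_sum : HasFDerivAt (fun y : EuclideanSpace ℝ n => ∑ i, φ i ((A *ᵥ y) i + b i))
      (∑ i, φ' i • innerSL ℝ (row i)) x :=
    HasFDerivAt.fun_sum fun i _ => (hφ i).comp_hasFDerivAt x (h_affine i)
  have h_grad : toLp 2 (Aᵀ *ᵥ φ') = ∑ i, φ' i • row i := by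
    ext j
    simp [row, mulVec, dotProduct, mul_comm]
  rw [hasGradientAt_iff_hasFDerivAt, h_grad]
  refine h_sum.congr_fderiv ?_
  ext1 v
  simp

lemma norm_transpose_mulVec_sub_le [DecidableEq n] (A : Matrix m n ℝ) {K : ℝ} (hK : 0 ≤ K)
    {u v : m → ℝ} {x y : EuclideanSpace ℝ n}
    (h : ∀ i, |u i - v i| ≤ K * |(A *ᵥ x) i - (A *ᵥ y) i|) :
    ‖toLp 2 (Aᵀ *ᵥ u) - toLp 2 (Aᵀ *ᵥ v)‖ ≤ K * ‖A‖ ^ 2 * ‖x - y‖ := by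
  classical
  have h_uv : ‖toLp 2 (u - v)‖ ≤ K * ‖toLp 2 (A *ᵥ (x - y).ofLp)‖ := by
    refine le_of_sq_le_sq ?_ (by positivity)
    rw [mul_pow, EuclideanSpace.norm_sq_eq, EuclideanSpace.norm_sq_eq, Finset.mul_sum]
    gcongr with i
    rw [← mul_pow]
    gcongr
    simpa [mulVec_sub] using h i
  calc ‖toLp 2 (Aᵀ *ᵥ u) - toLp 2 (Aᵀ *ᵥ v)‖ = ‖toLp 2 (Aᵀ *ᵥ (u - v))‖ := by
        rw [mulVec_sub, WithLp.toLp_sub]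
    _ ≤ ‖Aᵀ‖ * ‖toLp 2 (u - v)‖ := l2_opNorm_mulVec Aᵀ (toLp 2 (u - v))
    _ = ‖A‖ * ‖toLp 2 (u - v)‖ := by
        rw [← conjTranspose_eq_transpose_of_trivial, l2_opNorm_conjTranspose]
    _ ≤ ‖A‖ * (K * (‖A‖ * ‖x - y‖)) := by
        gcongr
        exact h_uv.trans (by gcongr; exact l2_opNorm_mulVec A (x - y))
    _ = K * ‖A‖ ^ 2 * ‖x - y‖ := by ring

end CompMulVec

section Scalar

lemma hasDerivAt_mul_log_div_add_sub (c : ℝ) {t : ℝ} (ht : t ≠ 0) :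
    HasDerivAt (fun s => c * Real.log (c / s) + s - c) (1 - c / t) t := by
  rcases eq_or_ne c 0 with rfl | hc
  · simpa using hasDerivAt_id' t
  · have h_div : HasDerivAt (fun s => c / s) (-c / t ^ 2) t := by
      simpa using (hasDerivAt_const t c).fun_div (hasDerivAt_id' t) ht
    have h_log := h_div.log (div_ne_zero hc ht)
    refine (((h_log.const_mul c).fun_add (hasDerivAt_id' t)).sub_const c).congr_deriv ?_
    field_simp
    ring

lemma abs_div_sub_div_le (c : ℝ) {β s t : ℝ} (hβ : 0 < β) (hs : β ≤ s) (ht : β ≤ t) :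
    |c / s - c / t| ≤ |c| / β ^ 2 * |s - t| := by
  have hs₀ : 0 < s := hβ.trans_le hs
  have ht₀ : 0 < t := hβ.trans_le ht
  calc |c / s - c / t| = |c| / (s * t) * |s - t| := by
        rw [div_sub_div _ _ hs₀.ne' ht₀.ne', mul_comm s c, ← mul_sub, abs_div, abs_mul,
          abs_of_pos (mul_pos hs₀ ht₀), abs_sub_comm t s, div_mul_eq_mul_div]
    _ ≤ |c| / β ^ 2 * |s - t| := by
        rw [sq]
        gcongr

end Scalar

section KLFidelity

variable {m n : Type*} [Fintype m] [Fintype n]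

/-- The generalized Kullback–Leibler fidelity `KL(A x + b; z)` of the observation `z`, for the
blurring matrix `A` and the background `b`. The convention `0 log 0 = 0` is built into `z * log _`;
the formula has its intended meaning where `z ≥ 0` and `A x + b > 0`. -/
noncomputable def klFidelity (A : Matrix m n ℝ) (b z : m → ℝ) (x : EuclideanSpace ℝ n) : ℝ :=
  ∑ i, (z i * Real.log (z i / ((A *ᵥ x) i + b i)) + ((A *ᵥ x) i + b i) - z i)

/-- The vector `Aᵀ e - Aᵀ (z ⊘ (A x + b))`, the gradient of `klFidelity A b z` at points with
`A x + b > 0`; the componentwise quotient is the division of `m → ℝ`. -/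
noncomputable def klFidelityGradient (A : Matrix m n ℝ) (b z : m → ℝ) (x : EuclideanSpace ℝ n) :
    EuclideanSpace ℝ n :=
  toLp 2 (Aᵀ *ᵥ 1 - Aᵀ *ᵥ (z / (A *ᵥ x + b)))

lemma hasGradientAt_klFidelity (A : Matrix m n ℝ) (b z : m → ℝ) {x : EuclideanSpace ℝ n}
    (hx : ∀ i, (A *ᵥ x) i + b i ≠ 0) :
    HasGradientAt (klFidelity A b z) (klFidelityGradient A b z x) x := by
  rw [klFidelityGradient, ← mulVec_sub]
  exact hasGradientAt_sum_comp_mulVec_add A b fun i => hasDerivAt_mul_log_div_add_sub (z i) (hx i)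

lemma norm_klFidelityGradient_sub_le [DecidableEq n] (A : Matrix m n ℝ) (b : m → ℝ) {z : m → ℝ}
    (hz : ∀ i, 0 ≤ z i) {β : ℝ} (hβ : 0 < β) {x y : EuclideanSpace ℝ n}
    (hx : ∀ i, β ≤ (A *ᵥ x) i + b i) (hy : ∀ i, β ≤ (A *ᵥ y) i + b i) :
    ‖klFidelityGradient A b z x - klFidelityGradient A b z y‖ ≤
      (⨆ i, z i) / β ^ 2 * ‖A‖ ^ 2 * ‖x - y‖ := by
  have h_sup : 0 ≤ ⨆ i, z i := Real.iSup_nonneg hz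
  simp only [klFidelityGradient, ← mulVec_sub]
  refine norm_transpose_mulVec_sub_le A (by positivity) fun i => ?_
  calc |(1 - z i / ((A *ᵥ x) i + b i)) - (1 - z i / ((A *ᵥ y) i + b i))|
      = |z i / ((A *ᵥ x) i + b i) - z i / ((A *ᵥ y) i + b i)| := by
        rw [sub_sub_sub_cancel_left, abs_sub_comm]
    _ ≤ |z i| / β ^ 2 * |(A *ᵥ x) i + b i - ((A *ᵥ y) i + b i)| :=
        abs_div_sub_div_le (z i) hβ (hx i) (hy i)
    _ ≤ (⨆ i, z i) / β ^ 2 * |(A *ᵥ x) i - (A *ᵥ y) i| := by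
        rw [abs_of_nonneg (hz i), add_sub_add_right_eq_sub]
        gcongr
        exact le_ciSup (Finite.bddAbove_range z) i

theorem KL_gradient_and_lipschitz_general (A : Matrix m n ℝ) (b : m → ℝ) {z : m → ℝ}
    (hz : ∀ i, 0 ≤ z i) {β : ℝ} (hβ : 0 < β) :
    (∀ x : EuclideanSpace ℝ n, (∀ i, 0 < (A *ᵥ x) i + b i) →
      HasGradientAt (klFidelity A b z) (klFidelityGradient A b z x) x) ∧
    (∀ x y : EuclideanSpace ℝ n, (∀ i, β ≤ (A *ᵥ x) i + b i) → (∀ i, β ≤ (A *ᵥ y) i + b i) →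
      ‖klFidelityGradient A b z x - klFidelityGradient A b z y‖ ≤
        (⨆ i, z i) / β ^ 2 * (⨆ j, ∑ i, |A i j|) * (⨆ i, ∑ j, |A i j|) * ‖x - y‖) := by
  classical
  refine ⟨fun x hx => hasGradientAt_klFidelity A b z fun i => (hx i).ne', fun x y hx hy => ?_⟩
  have h_sup : 0 ≤ ⨆ i, z i := Real.iSup_nonneg hz
  refine (norm_klFidelityGradient_sub_le A b hz hβ hx hy).trans ?_
  rw [mul_assoc (_ / _) (⨆ j, _)]
  gcongr
  exact l2_opNorm_sq_le_iSup_col_mul_iSup_row A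

end KLFidelity

/-- **Gradient and Lipschitz constant of the Kullback–Leibler fidelity with constant
background `β`:** for `f(x) = KL(Hx + βe; z)` on the nonnegative orthant,
`∇f(x) = Hᵀe − Hᵀ(z ⊘ (Hx + βe))` and `∇f` is Lipschitz there with constant
`L_f = (max_i z_i / β²)·(max_i (Hᵀe)_i)·(max_i (He)_i)` (maxima written as suprema
over the nonempty index type `Fin n`). -/
theorem KL_gradient_and_lipschitz
    (n : ℕ) (hn : 0 < n) (z : Fin n → ℝ) (hz : ∀ i, 0 ≤ z i)
    (β : ℝ) (hβ : 0 < β)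
    (A : Matrix (Fin n) (Fin n) ℝ) (hA : ∀ i j, 0 ≤ A i j)
    (f : EuclideanSpace ℝ (Fin n) → ℝ)
    (hf : ∀ x : EuclideanSpace ℝ (Fin n),
      f x = ∑ i, (z i * Real.log (z i / (A.mulVec (fun i' => x i') i + β))
          + (A.mulVec (fun i' => x i') i + β) - z i))
    (G : EuclideanSpace ℝ (Fin n) → EuclideanSpace ℝ (Fin n))
    (hG : ∀ (x : EuclideanSpace ℝ (Fin n)) (j : Fin n),
      G x j = A.transpose.mulVec (fun _ => 1) j
        - A.transpose.mulVec (fun i => z i / (A.mulVec (fun i' => x i') i + β)) j) :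
    (∀ x : EuclideanSpace ℝ (Fin n), (∀ i, 0 ≤ x i) → HasGradientAt f (G x) x) ∧
    (∀ x y : EuclideanSpace ℝ (Fin n), (∀ i, 0 ≤ x i) → (∀ i, 0 ≤ y i) →
      ‖G x - G y‖ ≤ ((⨆ i, z i) / β ^ 2) * (⨆ i, A.transpose.mulVec (fun _ => 1) i)
          * (⨆ i, A.mulVec (fun _ => 1) i) * ‖x - y‖) := by
  have hf_eq : f = klFidelity A (fun _ => β) z := funext hf
  have hG_eq : G = klFidelityGradient A (fun _ => β) z := by
    funext x
    ext j
    exact hG x j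
  have h_background (x : EuclideanSpace ℝ (Fin n)) (hx : ∀ i, 0 ≤ x i) (i : Fin n) :
      β ≤ (A *ᵥ x) i + β :=
    le_add_of_nonneg_left (dotProduct_nonneg_of_nonneg (hA i) hx)
  have h_abs (i j : Fin n) : |A i j| = A i j := abs_of_nonneg (hA i j)
  obtain ⟨h_gradient, h_lipschitz⟩ := KL_gradient_and_lipschitz_general A (fun _ => β) hz hβ
  rw [hf_eq, hG_eq]
  refine ⟨fun x hx => h_gradient x fun i => hβ.trans_le (h_background x hx i), fun x y hx hy => ?_⟩
  simpa [mulVec, dotProduct, h_abs] using h_lipschitz x y (h_background x hx) (h_background y hy)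
end
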